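/- arXiv:1710.02472 — 6 statements merged into one kernel-verified Lean document; each statement's English description precedes it below -/
import Mathlib

section
/- For every pair (x,y) ∈ LAJ(D,P) and all a,b ∈ {1,…,n}, the inequality Σ_{k≠a, l≠b} p_{ak} d_{bl} y_{abkl} ≥ l_{ab} x_{ab} holds; that is, the first Xia–Yuan inequality z_{ab} ≥ l_{ab} x_{ab} is valid for the projection of the relaxed Adams–Johnson linearization. -/
open Finset

/-- `x` is doubly stochastic (the relaxed permutation polytope `LX_n`). -/
def IsLXn {n : ℕ} (x : Fin n → Fin n → ℝ) : Prop :=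
  (∀ i j, 0 ≤ x i j) ∧ (∀ i, ∑ j, x i j = 1) ∧ (∀ j, ∑ i, x i j = 1)

/-- `(x, y)` lies in the linear relaxation `LAJ(D,P)` of the Adams–Johnson linearization. -/
def MemLAJ {n : ℕ} (x : Fin n → Fin n → ℝ)
    (y : Fin n → Fin n → Fin n → Fin n → ℝ) : Prop :=
  IsLXn x ∧
  (∀ i j k l, i ≠ k → j ≠ l → 0 ≤ y i j k l) ∧
  (∀ i j k l, i ≠ k → j ≠ l → y i j k l = y k l i j) ∧
  (∀ j k l, j ≠ l → ∑ i ∈ univ.erase k, y i j k l = x k l) ∧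
  (∀ i k l, i ≠ k → ∑ j ∈ univ.erase l, y i j k l = x k l)

/-- `v` is the minimum over all bijections `{1,…,n}\{i} → {1,…,n}\{j}` (equivalently,
permutations `σ` of `Fin n` with `σ i = j`) of `Σ_{k≠i} p_{ik} d_{j,σ(k)}`. -/
def IsLVal {n : ℕ} (P D : Fin n → Fin n → ℝ) (i j : Fin n) (v : ℝ) : Prop :=
  IsLeast {w : ℝ | ∃ σ : Equiv.Perm (Fin n), σ i = j ∧
    w = ∑ k ∈ univ.erase i, P i k * D j (σ k)} v

/-!
For fixed `(a, b)` the array `y a b` has all row sums (rows `k ≠ a`) and all column sums (columns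
`l ≠ b`) equal to `x a b`. Placing `x a b` at `(a, b)` and zeros elsewhere in row `a` and column `b`
turns it into `x a b` times a doubly stochastic matrix. By Birkhoff's theorem this matrix is `x a b`
times a convex combination of permutation matrices whose support lies in its own; since the entries
of row `a` off `(a, b)` vanish, only permutations with `σ a = b` occur, and each of these costs at
least `lo a b` over the rows `k ≠ a`. Setting the costs of row `a` to zero excludes it from the sum.
-/

theorem sum_sum_mul_sum_smul_permMatrix {ι R : Type*} [Fintype ι] [DecidableEq ι] [CommSemiring R]
    (c : ι → ι → R) (w : Equiv.Perm ι → R) :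
    ∑ i, ∑ j, c i j * (∑ σ, w σ • σ.permMatrix R) i j = ∑ σ, w σ * ∑ i, c i (σ i) := by
  have hrow (i : ι) :
      ∑ j, c i j * (∑ σ, w σ • σ.permMatrix R) i j = ∑ σ, w σ * c i (σ i) := by
    simp only [Matrix.sum_apply, mul_sum]
    rw [sum_comm]
    simp [PEquiv.toMatrix_apply, Equiv.toPEquiv_apply, mul_comm]
  simp only [hrow, mul_sum]
  exact sum_comm

section DoublyStochastic

variable {ι R : Type*} [Fintype ι] [Field R] [LinearOrder R] [IsStrictOrderedRing R]

theorem exists_eq_sum_perm_le_of_mem_doublyStochastic [DecidableEq ι] {M : Matrix ι ι R}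
    (hM : M ∈ doublyStochastic R ι) :
    ∃ w : Equiv.Perm ι → R, (∀ σ, 0 ≤ w σ) ∧ ∑ σ, w σ = 1 ∧
      ∑ σ, w σ • σ.permMatrix R = M ∧ ∀ σ i, w σ ≤ M i (σ i) := by
  obtain ⟨w, hw_nonneg, hw_sum, rfl⟩ := exists_eq_sum_perm_of_mem_doublyStochastic hM
  refine ⟨w, hw_nonneg, hw_sum, rfl, fun σ i => ?_⟩
  have hterm_nonneg (τ : Equiv.Perm ι) : 0 ≤ (w τ • τ.permMatrix R) i (σ i) :=
    mul_nonneg (hw_nonneg τ) (nonneg_of_mem_doublyStochastic permMatrix_mem_doublyStochastic)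
  calc w σ = (w σ • σ.permMatrix R) i (σ i) := by simp [Equiv.toPEquiv_apply]
    _ ≤ ∑ τ, (w τ • τ.permMatrix R) i (σ i) :=
        single_le_sum (fun τ _ => hterm_nonneg τ) (mem_univ σ)
    _ = (∑ τ, w τ • τ.permMatrix R) i (σ i) := (Matrix.sum_apply _ _ _ _).symm

theorem le_sum_sum_mul_of_mem_doublyStochastic [DecidableEq ι] {M : Matrix ι ι R}
    (hM : M ∈ doublyStochastic R ι) {c : ι → ι → R} {v : R}
    (hv : ∀ σ : Equiv.Perm ι, (∀ i, M i (σ i) ≠ 0) → v ≤ ∑ i, c i (σ i)) :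
    v ≤ ∑ i, ∑ j, c i j * M i j := by
  obtain ⟨w, hw_nonneg, hw_sum, hwM, hw_le⟩ := exists_eq_sum_perm_le_of_mem_doublyStochastic hM
  have hterm (σ : Equiv.Perm ι) : w σ * v ≤ w σ * ∑ i, c i (σ i) := by
    obtain hσ | hσ := (hw_nonneg σ).eq_or_lt
    · simp [← hσ]
    · exact mul_le_mul_of_nonneg_left (hv σ fun i => (hσ.trans_le (hw_le σ i)).ne') hσ.le
  calc v = ∑ σ, w σ * v := by rw [← sum_mul, hw_sum, one_mul]
    _ ≤ ∑ σ, w σ * ∑ i, c i (σ i) := sum_le_sum fun σ _ => hterm σ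
    _ = ∑ i, ∑ j, c i j * M i j := by rw [← sum_sum_mul_sum_smul_permMatrix, hwM]

theorem mul_le_sum_sum_mul_of_sum_eq {M : Matrix ι ι R} {s : R} (hs : 0 ≤ s)
    (hM_nonneg : ∀ i j, 0 ≤ M i j) (hM_row : ∀ i, ∑ j, M i j = s) (hM_col : ∀ j, ∑ i, M i j = s)
    {c : ι → ι → R} {v : R}
    (hv : ∀ σ : Equiv.Perm ι, (∀ i, M i (σ i) ≠ 0) → v ≤ ∑ i, c i (σ i)) :
    v * s ≤ ∑ i, ∑ j, c i j * M i j := by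
  classical
  obtain ⟨N, hN, rfl⟩ :=
    (exists_mem_doublyStochastic_eq_smul_iff hs).2 ⟨hM_nonneg, hM_row, hM_col⟩
  obtain rfl | hs_ne := eq_or_ne s 0
  · simp
  have hvN : v ≤ ∑ i, ∑ j, c i j * N i j :=
    le_sum_sum_mul_of_mem_doublyStochastic hN fun σ hσ =>
      hv σ fun i => mul_ne_zero hs_ne (hσ i)
  calc v * s ≤ (∑ i, ∑ j, c i j * N i j) * s := mul_le_mul_of_nonneg_right hvN hs
    _ = ∑ i, ∑ j, c i j * (s • N) i j := by
        simp only [sum_mul, Matrix.smul_apply, smul_eq_mul, mul_assoc, mul_comm s]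

end DoublyStochastic

section CornerMatrix

variable {ι R : Type*} [DecidableEq ι]

/-- The matrix with entry `s` at `(a, b)`, zeros elsewhere in row `a` and column `b`, and the
entries of `z` everywhere else: it extends an assignment of the rows `k ≠ a` to the columns `l ≠ b`
by the pair `(a, b)`. The entries of `z` in row `a` and column `b` are ignored. -/
def cornerMatrix [Zero R] (a b : ι) (s : R) (z : ι → ι → R) : Matrix ι ι R :=
  Matrix.of fun k l => if k = a ∧ l = b then s else if k = a ∨ l = b then 0 else z k l

section Zero

variable [Zero R] {a b k l : ι} {s : R} {z : ι → ι → R}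

theorem cornerMatrix_apply_corner : cornerMatrix a b s z a b = s := by
  simp [cornerMatrix]

theorem cornerMatrix_apply_row (hl : l ≠ b) : cornerMatrix a b s z a l = 0 := by
  simp [cornerMatrix, hl]

theorem cornerMatrix_apply_col (hk : k ≠ a) : cornerMatrix a b s z k b = 0 := by
  simp [cornerMatrix, hk]

theorem cornerMatrix_apply_of_ne (hk : k ≠ a) (hl : l ≠ b) :
    cornerMatrix a b s z k l = z k l := by
  simp [cornerMatrix, hk, hl]

theorem transpose_cornerMatrix :
    (cornerMatrix a b s z).transpose = cornerMatrix b a s fun l k => z k l := by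
  ext l k
  simp only [cornerMatrix, Matrix.transpose_apply, Matrix.of_apply, and_comm, or_comm]

theorem cornerMatrix_nonneg [Preorder R] (hs : 0 ≤ s)
    (hz : ∀ k ≠ a, ∀ l ≠ b, 0 ≤ z k l) (k l : ι) : 0 ≤ cornerMatrix a b s z k l := by
  simp only [cornerMatrix, Matrix.of_apply]
  split_ifs with _ hcross
  · exact hs
  · exact le_rfl
  · exact hz k (fun hk => hcross (.inl hk)) l (fun hl => hcross (.inr hl))

end Zero

variable [Fintype ι] {a b : ι} {s : R} {z : ι → ι → R}

theorem sum_row_cornerMatrix [AddCommMonoid R]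
    (hz : ∀ k ≠ a, ∑ l ∈ univ.erase b, z k l = s) (k : ι) :
    ∑ l, cornerMatrix a b s z k l = s := by
  obtain rfl | hk := eq_or_ne k a
  · rw [Fintype.sum_eq_single b fun l => cornerMatrix_apply_row, cornerMatrix_apply_corner]
  · rw [← sum_erase univ (cornerMatrix_apply_col hk), ← hz k hk]
    exact sum_congr rfl fun l hl => cornerMatrix_apply_of_ne hk (ne_of_mem_erase hl)

theorem sum_col_cornerMatrix [AddCommMonoid R]
    (hz : ∀ l ≠ b, ∑ k ∈ univ.erase a, z k l = s) (l : ι) :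
    ∑ k, cornerMatrix a b s z k l = s := by
  calc ∑ k, cornerMatrix a b s z k l = ∑ k, cornerMatrix b a s (fun l k => z k l) l k := by
        simp only [← transpose_cornerMatrix, Matrix.transpose_apply]
    _ = s := sum_row_cornerMatrix hz l

theorem sum_sum_update_zero_mul_cornerMatrix [NonUnitalNonAssocSemiring R] (c : ι → ι → R) :
    ∑ k, ∑ l, Function.update c a 0 k l * cornerMatrix a b s z k l =
      ∑ k ∈ univ.erase a, ∑ l ∈ univ.erase b, c k l * z k l := by
  rw [← sum_erase univ (a := a) (by simp)]
  refine sum_congr rfl fun k hk => ?_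
  have hka : k ≠ a := ne_of_mem_erase hk
  rw [← sum_erase univ (a := b) (by rw [cornerMatrix_apply_col hka, mul_zero])]
  refine sum_congr rfl fun l hl => ?_
  rw [Function.update_of_ne hka, cornerMatrix_apply_of_ne hka (ne_of_mem_erase hl)]

end CornerMatrix

theorem sum_update_zero_apply {ι κ R : Type*} [Fintype ι] [DecidableEq ι] [AddCommMonoid R]
    (c : ι → κ → R) (a : ι) (f : ι → κ) :
    ∑ k, Function.update c a 0 k (f k) = ∑ k ∈ univ.erase a, c k (f k) := by
  rw [← sum_erase univ (a := a) (by simp)]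
  exact sum_congr rfl fun k hk => by rw [Function.update_of_ne (ne_of_mem_erase hk)]

namespace MemLAJ

variable {n : ℕ} {x : Fin n → Fin n → ℝ} {y : Fin n → Fin n → Fin n → Fin n → ℝ}

theorem nonneg (h : MemLAJ x y) (i j : Fin n) : 0 ≤ x i j :=
  h.1.1 i j

theorem pair_nonneg (h : MemLAJ x y) {i j k l : Fin n} (hk : k ≠ i) (hl : l ≠ j) :
    0 ≤ y i j k l :=
  h.2.1 i j k l hk.symm hl.symm

theorem pair_comm (h : MemLAJ x y) {i j k l : Fin n} (hk : k ≠ i) (hl : l ≠ j) :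
    y i j k l = y k l i j :=
  h.2.2.1 i j k l hk.symm hl.symm

theorem sum_pair_row (h : MemLAJ x y) {i j k : Fin n} (hk : k ≠ i) :
    ∑ l ∈ univ.erase j, y i j k l = x i j := by
  rw [← h.2.2.2.2 k i j hk]
  exact sum_congr rfl fun l hl => h.pair_comm hk (ne_of_mem_erase hl)

theorem sum_pair_col (h : MemLAJ x y) {i j l : Fin n} (hl : l ≠ j) :
    ∑ k ∈ univ.erase i, y i j k l = x i j := by
  rw [← h.2.2.2.1 l i j hl]
  exact sum_congr rfl fun k hk => h.pair_comm (ne_of_mem_erase hk) hl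

end MemLAJ

theorem first_XY_inequality_valid_for_proj_LAJ_general {ι R : Type*} [Fintype ι] [DecidableEq ι]
    [Field R] [LinearOrder R] [IsStrictOrderedRing R] {a b : ι} {s : R} {z : ι → ι → R}
    (hs : 0 ≤ s) (hz_nonneg : ∀ k ≠ a, ∀ l ≠ b, 0 ≤ z k l)
    (hz_row : ∀ k ≠ a, ∑ l ∈ univ.erase b, z k l = s)
    (hz_col : ∀ l ≠ b, ∑ k ∈ univ.erase a, z k l = s)
    {c : ι → ι → R} {v : R}
    (hv : ∀ σ : Equiv.Perm ι, σ a = b → v ≤ ∑ k ∈ univ.erase a, c k (σ k)) :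
    v * s ≤ ∑ k ∈ univ.erase a, ∑ l ∈ univ.erase b, c k l * z k l := by
  rw [← sum_sum_update_zero_mul_cornerMatrix (s := s)]
  refine mul_le_sum_sum_mul_of_sum_eq hs (cornerMatrix_nonneg hs hz_nonneg)
    (sum_row_cornerMatrix hz_row) (sum_col_cornerMatrix hz_col) fun σ hσ => ?_
  have hσab : σ a = b := by_contra fun h => hσ a (cornerMatrix_apply_row h)
  rw [sum_update_zero_apply]
  exact hv σ hσab

/-- the first Xia–Yuan inequality `z_{ab} ≥ l_{ab} x_{ab}` is valid for the
projection of the relaxed Adams–Johnson linearization. -/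
theorem first_XY_inequality_valid_for_proj_LAJ (n : ℕ) (hn : 2 ≤ n)
    (P D lo : Fin n → Fin n → ℝ)
    (hlo : ∀ i j, IsLVal P D i j (lo i j))
    (x : Fin n → Fin n → ℝ) (y : Fin n → Fin n → Fin n → Fin n → ℝ)
    (hxy : MemLAJ x y) (a b : Fin n) :
    lo a b * x a b ≤
      ∑ k ∈ univ.erase a, ∑ l ∈ univ.erase b, P a k * D b l * y a b k l := by
  exact first_XY_inequality_valid_for_proj_LAJ_general (hxy.nonneg a b)
    (fun _ hk _ hl => hxy.pair_nonneg hk hl) (fun _ hk => hxy.sum_pair_row hk)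
    (fun _ hl => hxy.sum_pair_col hl) (fun σ hσ => (hlo a b).2 ⟨σ, hσ, rfl⟩)
end

section
/- For all a,b ∈ {1,…,n} there exist real multipliers β¹_l for l ∈ {1,…,n}\{b} and β²_k for k ∈ {1,…,n}\{a} such that −p_{ak} d_{bl} ≤ β¹_l + β²_k for all k≠a, l≠b, and Σ_{l≠b} β¹_l + Σ_{k≠a} β²_k = −l_{ab}. -/
open Finset

/-!
A permutation minimizing `∑ f k * g (σ k)` pairs large values of `f` with small values of `g ∘ σ`,
since otherwise a transposition would lower the sum. Sorting the indices accordingly, `f` lists the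
decreasing slopes of a concave piecewise linear function of `g ∘ σ`. The values of that function and
the intercepts of its tangent lines are optimal dual variables for the assignment problem with
costs `f k * g l`.
-/

section Duality

variable {ι R : Type*} [CommRing R] {s : Finset ι} {f g w : ι → R}

theorem sum_mul_comp_swap [DecidableEq ι] {i j : ι} (hi : i ∈ s) (hj : j ∈ s) :
    ∑ k ∈ s, f k * g (Equiv.swap i j k) = ∑ k ∈ s, f k * g k - (f j - f i) * (g j - g i) := by
  rcases eq_or_ne i j with rfl | hij
  · simp
  rw [eq_sub_iff_add_eq, ← eq_sub_iff_add_eq', ← sum_sub_distrib,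
    sum_eq_add_of_mem i j hi hj hij fun k _ hk => by
      rw [Equiv.swap_apply_of_ne_of_ne hk.1 hk.2, sub_self],
    Equiv.swap_apply_left, Equiv.swap_apply_right]
  ring

variable [LinearOrder R] [IsStrictOrderedRing R]

theorem antivaryOn_of_sum_mul_le_sum_mul_comp_swap [DecidableEq ι]
    (h : ∀ i ∈ s, ∀ j ∈ s, ∑ k ∈ s, f k * g k ≤ ∑ k ∈ s, f k * g (Equiv.swap i j k)) :
    AntivaryOn f g s := by
  refine antivaryOn_iff_forall_mul_nonpos.2 fun i hi j hj => ?_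
  have hswap := h i hi j hj
  rwa [sum_mul_comp_swap hi hj, le_sub_self_iff] at hswap

/-- On the index set `t`, the values `w i` are those of a concave function at the points `g i`,
with `f i` a supergradient there. Encoded by indices rather than by an actual function, so that
`g` may repeat values. -/
def IsSupergradientOn (f g w : ι → R) (t : Set ι) : Prop :=
  ∀ i ∈ t, ∀ j ∈ t, w j - w i ≤ f i * (g j - g i)

theorem IsSupergradientOn.insert [DecidableEq ι] {t : Set ι} {m q : ι}
    (hw : IsSupergradientOn f g w t) (hm : m ∉ t) (hq : q ∈ t) (hfq : ∀ i ∈ t, f q ≤ f i)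
    (hgq : ∀ i ∈ t, g i ≤ g q) (hfm : f m ≤ f q) (hgm : g q ≤ g m) :
    IsSupergradientOn f g (Function.update w m (w q + f q * (g m - g q))) (insert m t) := by
  have hne : ∀ i ∈ t, i ≠ m := fun i hi => ne_of_mem_of_not_mem hi hm
  intro i hi j hj
  rcases hi with rfl | hit <;> rcases hj with rfl | hjt
  · simp
  · rw [Function.update_self, Function.update_of_ne (hne j hjt)]
    calc w j - (w q + f q * (g i - g q))
        _ ≤ f q * (g j - g i) := by linarith [hw q hq j hjt]
        _ ≤ f i * (g j - g i) :=
          mul_le_mul_of_nonpos_right hfm (sub_nonpos.2 ((hgq j hjt).trans hgm))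
  · rw [Function.update_self, Function.update_of_ne (hne i hit)]
    calc w q + f q * (g j - g q) - w i
        _ ≤ f i * (g q - g i) + f q * (g j - g q) := by linarith [hw i hit q hq]
        _ ≤ f i * (g q - g i) + f i * (g j - g q) := by
          gcongr
          exact hfq i hit
        _ = f i * (g j - g i) := by ring
  · rw [Function.update_of_ne (hne i hit), Function.update_of_ne (hne j hjt)]
    exact hw i hit j hjt

theorem exists_isSupergradientOn_of_antivaryOn (hfg : AntivaryOn f g s) :
    ∃ w, IsSupergradientOn f g w s := by
  classical
  obtain ⟨_, hf, hg⟩ := hfg.exists_antitoneOn_monotoneOn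
  clear hfg
  induction s using Finset.induction_on_max with
  | empty => exact ⟨0, by simp [IsSupergradientOn]⟩
  | insert m s hlt ih =>
    rcases s.eq_empty_or_nonempty with rfl | hs
    · exact ⟨0, by simp [IsSupergradientOn]⟩
    have hsub : (s : Set ι) ⊆ insert m s := Set.subset_insert _ _
    rw [coe_insert] at hf hg ⊢
    obtain ⟨w, hw⟩ := ih (hf.mono hsub) (hg.mono hsub)
    have hq := s.max'_mem hs
    have hmem : m ∈ insert m (s : Set ι) := Set.mem_insert _ _
    exact ⟨_, hw.insert (fun h => (hlt m h).false) hq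
      (fun i hi => hf (hsub hi) (hsub hq) (s.le_max' i hi))
      (fun i hi => hg (hsub hi) (hsub hq) (s.le_max' i hi))
      (hf (hsub hq) hmem (hlt _ hq).le) (hg (hsub hq) hmem (hlt _ hq).le)⟩

theorem exists_dual_of_sum_mul_le_sum_mul_comp_swap [DecidableEq ι]
    (h : ∀ i ∈ s, ∀ j ∈ s, ∑ k ∈ s, f k * g k ≤ ∑ k ∈ s, f k * g (Equiv.swap i j k)) :
    ∃ u v : ι → R, (∀ i ∈ s, ∀ j ∈ s, u i + v j ≤ f i * g j) ∧
      ∑ i ∈ s, u i + ∑ i ∈ s, v i = ∑ i ∈ s, f i * g i := by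
  obtain ⟨w, hw⟩ :=
    exists_isSupergradientOn_of_antivaryOn (antivaryOn_of_sum_mul_le_sum_mul_comp_swap h)
  refine ⟨fun i => f i * g i - w i, w, fun i hi j hj => ?_, ?_⟩
  · linarith [hw i hi j hj]
  · rw [sum_sub_distrib, sub_add_cancel]

end Duality

/-- existence of dual multipliers `β¹, β²` with
`−p_{ak} d_{bl} ≤ β¹_l + β²_k` for all `k≠a, l≠b`, summing to `−l_{ab}`. -/
theorem exists_multipliers_L (n : ℕ) (hn : 2 ≤ n)
    (P D lo : Fin n → Fin n → ℝ)
    (hlo : ∀ i j, IsLVal P D i j (lo i j)) (a b : Fin n) :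
    ∃ (β1 β2 : Fin n → ℝ),
      (∀ k l, k ≠ a → l ≠ b → -(P a k * D b l) ≤ β1 l + β2 k) ∧
      (∑ l ∈ univ.erase b, β1 l) + (∑ k ∈ univ.erase a, β2 k) = -(lo a b) := by
  obtain ⟨⟨σ, rfl, hlo_eq⟩, hlo_le⟩ := hlo a b
  have hopt : ∀ i ∈ univ.erase a, ∀ j ∈ univ.erase a,
      ∑ k ∈ univ.erase a, P a k * D (σ a) (σ k) ≤
        ∑ k ∈ univ.erase a, P a k * D (σ a) (σ (Equiv.swap i j k)) := by
    intro i hi j hj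
    have hfix : Equiv.swap i j a = a :=
      Equiv.swap_apply_of_ne_of_ne (ne_of_mem_erase hi).symm (ne_of_mem_erase hj).symm
    exact hlo_eq ▸ hlo_le ⟨σ * Equiv.swap i j, congrArg σ hfix, rfl⟩
  obtain ⟨u, v, hle, hsum⟩ :=
    exists_dual_of_sum_mul_le_sum_mul_comp_swap (g := fun k => D (σ a) (σ k)) hopt
  refine ⟨fun l => -v (σ.symm l), fun k => -u k, fun k l hk hl => ?_, ?_⟩
  · have hl' : σ.symm l ≠ a := by rwa [Ne, Equiv.symm_apply_eq]
    have hkl := hle k (by simp [hk]) (σ.symm l) (by simp [hl'])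
    rw [Equiv.apply_symm_apply] at hkl
    linarith
  · have hreindex : ∑ l ∈ univ.erase (σ a), -v (σ.symm l) = ∑ k ∈ univ.erase a, -v k :=
      (sum_equiv σ (by simp) (by simp)).symm
    rw [hreindex, hlo_eq, ← hsum, sum_neg_distrib, sum_neg_distrib]
    ring
end

section
/- Suppose there exist a,b,c,d ∈ {1,…,n} with a ≠ c and b ≠ d such that: (1) every bijection φ : {1,…,n}\{a} → {1,…,n}\{b} attaining the minimum l_{ab} satisfies φ(c) = d, and (2) every bijection ψ : {1,…,n}\{c} → {1,…,n}\{d} attaining the minimum l_{cd} satisfies ψ(a) ≠ b. Let x* be the uniform matrix with x*_{ij} = 1/n for all i,j. Then there is no family y such that (x*,y) ∈ LAJ(D,P) and z(y)_{ij} = l_{ij}/n for all i,j ∈ {1,…,n}. -/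
open Finset

/-- The projected variables `z(y)_{ij} = Σ_{k≠i, l≠j} p_{ik} d_{jl} y_{ijkl}`. -/
def projZ {n : ℕ} (P D : Fin n → Fin n → ℝ)
    (y : Fin n → Fin n → Fin n → Fin n → ℝ) (i j : Fin n) : ℝ :=
  ∑ k ∈ univ.erase i, ∑ l ∈ univ.erase j, P i k * D j l * y i j k l

/-!
Complete the slice `y_{ij··}` to a matrix by putting `x_{ij}` at `(i, j)` and zeros elsewhere in
row `i` and column `j`. The slice is then `x_{ij}` times a doubly stochastic matrix `S`, and
`z_{ij} = l_{ij} x_{ij}` says that `S` has the minimum cost `l_{ij}`. By Birkhoff's theorem `S` is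
a convex combination of permutations mapping `i` to `j`, so these are all minimizers, and every
nonzero entry of `S` is covered by one of them.

If `x_{ab} ≠ 0`, a minimizer for `(a, b)` supported in the slice exists; it maps `c` to `d` by (1),
hence `y_{abcd} ≠ 0`. By symmetry `y_{cdab} ≠ 0`, and this entry is covered by a minimizer for
`(c, d)` that maps `a` to `b`, contradicting (2).
-/

section Birkhoff

variable {ι R : Type*} [Fintype ι] [DecidableEq ι]

theorem sum_smul_permMatrix_apply [NonAssocSemiring R] (w : Equiv.Perm ι → R) (i j : ι) :
    (∑ σ, w σ • σ.permMatrix R) i j = ∑ σ, if σ i = j then w σ else 0 := by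
  simp [Matrix.sum_apply, PEquiv.toMatrix_apply, Equiv.toPEquiv_apply]

theorem sum_mul_sum_smul_permMatrix [CommSemiring R] (w : Equiv.Perm ι → R) (C : ι → ι → R)
    (s : Finset ι) :
    ∑ i ∈ s, ∑ j, C i j * (∑ σ, w σ • σ.permMatrix R) i j =
      ∑ σ, w σ * ∑ i ∈ s, C i (σ i) := by
  simp_rw [sum_smul_permMatrix_apply, Finset.mul_sum]
  rw [Finset.sum_comm (s := univ (α := Equiv.Perm ι))]
  refine Finset.sum_congr rfl fun i _ => ?_
  rw [Finset.sum_comm]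
  simp [mul_comm]

variable [Field R] [LinearOrder R] [IsStrictOrderedRing R]

theorem sum_smul_permMatrix_apply_ne_zero {w : Equiv.Perm ι → R} (hw : ∀ σ, 0 ≤ w σ)
    {σ : Equiv.Perm ι} (hσ : w σ ≠ 0) (i : ι) :
    (∑ τ, w τ • τ.permMatrix R) i (σ i) ≠ 0 := by
  rw [sum_smul_permMatrix_apply]
  refine (Finset.sum_pos' (fun τ _ => ?_) ⟨σ, mem_univ σ, ?_⟩).ne'
  · split_ifs
    exacts [hw τ, le_rfl]
  · simpa using (hw σ).lt_of_ne' hσ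

theorem eq_of_weighted_sum_eq_of_le {κ : Type*} {s : Finset κ} {w f : κ → R} {v : R}
    (hw : ∀ i ∈ s, 0 ≤ w i) (hw_sum : ∑ i ∈ s, w i = 1) (hf : ∑ i ∈ s, w i * f i = v)
    (hv : ∀ i ∈ s, w i ≠ 0 → v ≤ f i) {i : κ} (hi : i ∈ s) (hwi : w i ≠ 0) : f i = v := by
  have hle : ∀ k ∈ s, w k * v ≤ w k * f k := fun k hk => by
    by_cases hwk : w k = 0
    · simp [hwk]
    · exact mul_le_mul_of_nonneg_left (hv k hk hwk) (hw k hk)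
  have hsum : ∑ k ∈ s, w k * v = ∑ k ∈ s, w k * f k := by
    rw [← Finset.sum_mul, hw_sum, one_mul, hf]
  exact (mul_left_cancel₀ hwi ((Finset.sum_eq_sum_iff_of_le hle).1 hsum i hi)).symm

theorem exists_perm_cost_eq_of_mem_doublyStochastic {M : Matrix ι ι R}
    (hM : M ∈ doublyStochastic R ι) {C : ι → ι → R} {s : Finset ι} {v : R}
    (hv : ∀ σ : Equiv.Perm ι, (∀ i, M i (σ i) ≠ 0) → v ≤ ∑ i ∈ s, C i (σ i))
    (hcost : ∑ i ∈ s, ∑ j, C i j * M i j = v) {k l : ι} (hkl : M k l ≠ 0) :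
    ∃ σ : Equiv.Perm ι,
      (∀ i, M i (σ i) ≠ 0) ∧ ∑ i ∈ s, C i (σ i) = v ∧ σ k = l := by
  obtain ⟨w, hw, hw_sum, rfl⟩ := exists_eq_sum_perm_of_mem_doublyStochastic hM
  rw [sum_mul_sum_smul_permMatrix] at hcost
  have hsupp : ∀ σ, w σ ≠ 0 → ∀ i, (∑ τ, w τ • τ.permMatrix R) i (σ i) ≠ 0 :=
    fun _ hσ => sum_smul_permMatrix_apply_ne_zero hw hσ
  obtain ⟨σ, -, hσ⟩ := Finset.exists_ne_zero_of_sum_ne_zero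
    (sum_smul_permMatrix_apply w k l ▸ hkl)
  obtain ⟨hσkl, hwσ⟩ := ite_ne_right_iff.1 hσ
  exact ⟨σ, hsupp σ hwσ, eq_of_weighted_sum_eq_of_le (fun τ _ => hw τ) hw_sum hcost
    (fun τ _ hτ => hv τ (hsupp τ hτ)) (mem_univ σ) hwσ, hσkl⟩

end Birkhoff

section CompletedSlice

variable {n : ℕ} {x : Fin n → Fin n → ℝ} {y : Fin n → Fin n → Fin n → Fin n → ℝ}

/-- The slice `y_{ij··}` of the lifted variables, completed by `y_{ijij} = x_{ij}` and by
`y_{ijkl} = 0` when exactly one of `k = i`, `l = j` holds. These are the values of the products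
`x_{ij} x_{kl}` at a permutation matrix `x`, which `y` linearizes. -/
def completedSlice (x : Fin n → Fin n → ℝ) (y : Fin n → Fin n → Fin n → Fin n → ℝ)
    (i j : Fin n) : Matrix (Fin n) (Fin n) ℝ :=
  Matrix.of fun k l =>
    if k = i ∧ l = j then x i j else if k = i ∨ l = j then 0 else y i j k l

theorem completedSlice_self (i j : Fin n) : completedSlice x y i j i j = x i j := by
  simp [completedSlice]

theorem completedSlice_of_ne {i j k l : Fin n} (hk : k ≠ i) (hl : l ≠ j) :
    completedSlice x y i j k l = y i j k l := by
  simp [completedSlice, hk, hl]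

theorem completedSlice_row_of_ne {i j l : Fin n} (hl : l ≠ j) :
    completedSlice x y i j i l = 0 := by
  simp [completedSlice, hl]

theorem completedSlice_col_of_ne {i j k : Fin n} (hk : k ≠ i) :
    completedSlice x y i j k j = 0 := by
  simp [completedSlice, hk]

theorem sum_mul_completedSlice (P D : Fin n → Fin n → ℝ) (i j : Fin n) :
    ∑ k ∈ univ.erase i, ∑ l, P i k * D j l * completedSlice x y i j k l = projZ P D y i j := by
  refine Finset.sum_congr rfl fun k hk => ?_
  have hk := Finset.ne_of_mem_erase hk
  rw [← Finset.add_sum_erase univ _ (mem_univ j), completedSlice_col_of_ne hk, mul_zero, zero_add]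
  refine Finset.sum_congr rfl fun l hl => ?_
  rw [completedSlice_of_ne hk (Finset.ne_of_mem_erase hl)]

namespace MemLAJ

theorem completedSlice_comm (h : MemLAJ x y) (i j k l : Fin n) :
    completedSlice x y i j k l = completedSlice x y k l i j := by
  by_cases hk : k = i <;> by_cases hl : l = j
  · rw [hk, hl]
  · rw [hk, completedSlice_row_of_ne hl, completedSlice_row_of_ne (Ne.symm hl)]
  · rw [hl, completedSlice_col_of_ne hk, completedSlice_col_of_ne (Ne.symm hk)]
  · rw [completedSlice_of_ne hk hl, completedSlice_of_ne (Ne.symm hk) (Ne.symm hl)]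
    exact h.2.2.1 i j k l (Ne.symm hk) (Ne.symm hl)

theorem completedSlice_nonneg (h : MemLAJ x y) (i j k l : Fin n) :
    0 ≤ completedSlice x y i j k l := by
  simp only [completedSlice, Matrix.of_apply]
  split_ifs with hself hcross
  · exact h.1.1 i j
  · exact le_rfl
  · obtain ⟨hk, hl⟩ := not_or.1 hcross
    exact h.2.1 i j k l (Ne.symm hk) (Ne.symm hl)

theorem sum_completedSlice_row (h : MemLAJ x y) (i j k : Fin n) :
    ∑ l, completedSlice x y i j k l = x i j := by
  obtain rfl | hk := eq_or_ne k i
  · rw [Fintype.sum_eq_single j fun l hl => completedSlice_row_of_ne hl, completedSlice_self]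
  · rw [← Finset.add_sum_erase univ _ (mem_univ j), completedSlice_col_of_ne hk, zero_add,
      ← h.2.2.2.2 k i j hk]
    refine Finset.sum_congr rfl fun l hl => ?_
    have hl := Finset.ne_of_mem_erase hl
    rw [h.completedSlice_comm, completedSlice_of_ne hk.symm hl.symm]

theorem sum_completedSlice_col (h : MemLAJ x y) (i j l : Fin n) :
    ∑ k, completedSlice x y i j k l = x i j := by
  obtain rfl | hl := eq_or_ne l j
  · rw [Fintype.sum_eq_single i fun k hk => completedSlice_col_of_ne hk, completedSlice_self]
  · rw [← Finset.add_sum_erase univ _ (mem_univ i), completedSlice_row_of_ne hl, zero_add,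
      ← h.2.2.2.1 l i j hl]
    refine Finset.sum_congr rfl fun k hk => ?_
    have hk := Finset.ne_of_mem_erase hk
    rw [h.completedSlice_comm, completedSlice_of_ne hk.symm hl.symm]

theorem exists_completedSlice_eq_smul (h : MemLAJ x y) (i j : Fin n) :
    ∃ S ∈ doublyStochastic ℝ (Fin n), completedSlice x y i j = x i j • S :=
  (exists_mem_doublyStochastic_eq_smul_iff (h.1.1 i j)).2
    ⟨h.completedSlice_nonneg i j, h.sum_completedSlice_row i j, h.sum_completedSlice_col i j⟩

theorem exists_perm_cost_eq (h : MemLAJ x y) {P D : Fin n → Fin n → ℝ} {i j : Fin n} {v : ℝ}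
    (hv : ∀ σ : Equiv.Perm (Fin n), σ i = j → v ≤ ∑ k ∈ univ.erase i, P i k * D j (σ k))
    (hz : projZ P D y i j = v * x i j) {k l : Fin n} (hkl : completedSlice x y i j k l ≠ 0) :
    ∃ σ : Equiv.Perm (Fin n), (∀ r, completedSlice x y i j r (σ r) ≠ 0) ∧ σ i = j ∧
      ∑ r ∈ univ.erase i, P i r * D j (σ r) = v ∧ σ k = l := by
  obtain ⟨S, hS, hslice⟩ := h.exists_completedSlice_eq_smul i j
  have hentry : ∀ r t, completedSlice x y i j r t = x i j * S r t := fun r t => by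
    rw [hslice, Matrix.smul_apply, smul_eq_mul]
  obtain ⟨hx, hSkl⟩ := mul_ne_zero_iff.1 (hentry k l ▸ hkl)
  have hsupp : ∀ r t, S r t ≠ 0 → completedSlice x y i j r t ≠ 0 := fun r t hrt =>
    hentry r t ▸ mul_ne_zero hx hrt
  have himage : ∀ σ : Equiv.Perm (Fin n), (∀ r, S r (σ r) ≠ 0) → σ i = j := fun σ hσ =>
    not_imp_comm.1 completedSlice_row_of_ne (hsupp i (σ i) (hσ i))
  have hcost : ∑ r ∈ univ.erase i, ∑ t, P i r * D j t * S r t = v := by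
    refine mul_right_cancel₀ hx ?_
    rw [← hz, ← sum_mul_completedSlice (x := x)]
    simp_rw [hentry, Finset.sum_mul, mul_assoc, mul_comm (x i j)]
  obtain ⟨σ, hσ, hσ_cost, hσkl⟩ := exists_perm_cost_eq_of_mem_doublyStochastic hS
    (fun τ hτ => hv τ (himage τ hτ)) hcost hSkl
  exact ⟨σ, fun r => hsupp r (σ r) (hσ r), himage σ hσ, hσ_cost, hσkl⟩

end MemLAJ

end CompletedSlice

theorem no_LAJ_lift_of_uniform_general {n : ℕ} {P D x : Fin n → Fin n → ℝ}
    {a b c d : Fin n} {lab lcd : ℝ}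
    (hlab : IsLVal P D a b lab) (hlcd : IsLVal P D c d lcd) (hx : x a b ≠ 0)
    (h1 : ∀ σ : Equiv.Perm (Fin n), σ a = b →
      (∑ k ∈ univ.erase a, P a k * D b (σ k)) = lab → σ c = d)
    (h2 : ∀ σ : Equiv.Perm (Fin n), σ c = d →
      (∑ k ∈ univ.erase c, P c k * D d (σ k)) = lcd → σ a ≠ b) :
    ¬ ∃ y : Fin n → Fin n → Fin n → Fin n → ℝ,
        MemLAJ x y ∧ projZ P D y a b = lab * x a b ∧ projZ P D y c d = lcd * x c d := by
  rintro ⟨y, hy, hzab, hzcd⟩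
  have hself : completedSlice x y a b a b ≠ 0 := completedSlice_self a b ▸ hx
  obtain ⟨σ, hσ, hσab, hσ_cost, -⟩ :=
    hy.exists_perm_cost_eq (fun τ hτ => hlab.2 ⟨τ, hτ, rfl⟩) hzab hself
  have habcd : completedSlice x y a b c d ≠ 0 := h1 σ hσab hσ_cost ▸ hσ c
  have hcdab : completedSlice x y c d a b ≠ 0 := hy.completedSlice_comm a b c d ▸ habcd
  obtain ⟨τ, -, hτcd, hτ_cost, hτab⟩ :=
    hy.exists_perm_cost_eq (fun τ hτ => hlcd.2 ⟨τ, hτ, rfl⟩) hzcd hcdab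
  exact h2 τ hτcd hτ_cost hτab

/-- under the stated structure of the coefficients, the uniform doubly
stochastic matrix `x*` with `x*_{ij} = 1/n` admits no `y` with `(x*, y) ∈ LAJ(D,P)`
and `z(y)_{ij} = l_{ij}/n` for all `i,j`. -/
theorem no_LAJ_lift_of_uniform (n : ℕ) (hn : 2 ≤ n)
    (P D lo : Fin n → Fin n → ℝ)
    (hlo : ∀ i j, IsLVal P D i j (lo i j))
    (a b c d : Fin n) (hac : a ≠ c) (hbd : b ≠ d)
    (h1 : ∀ σ : Equiv.Perm (Fin n), σ a = b →
      (∑ k ∈ univ.erase a, P a k * D b (σ k)) = lo a b → σ c = d)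
    (h2 : ∀ σ : Equiv.Perm (Fin n), σ c = d →
      (∑ k ∈ univ.erase c, P c k * D d (σ k)) = lo c d → σ a ≠ b) :
    ¬ ∃ y : Fin n → Fin n → Fin n → Fin n → ℝ,
        MemLAJ (fun _ _ => (1 : ℝ) / n) y ∧
        ∀ i j, projZ P D y i j = lo i j / n := fun ⟨y, hy, hz⟩ =>
  no_LAJ_lift_of_uniform_general (hlo a b) (hlo c d) (by positivity) h1 h2
    ⟨y, hy, (hz a b).trans (div_eq_mul_one_div _ _), (hz c d).trans (div_eq_mul_one_div _ _)⟩
end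

section
/- Every ab-cut is valid for the quadratic assignment problem: for every permutation matrix x ∈ X_n, with z defined by z_{ij} = x_{ij} · Σ_{k≠i, l≠j} p_{ik} d_{jl} x_{kl} for all i,j, for all a,b ∈ {1,…,n} and every triple (β¹,β²,δ) that is dual feasible for (a,b), the inequality z_{ab} ≥ −(Σ_{l≠b} β¹_l + Σ_{k≠a} β²_k)·x_{ab} − Σ_{k≠a, l≠b} δ_{kl} x_{kl} holds. -/
open Finset

/-- `x` is a permutation matrix (the set `X_n`): a 0/1 matrix with exactly one `1`
in each row and each column. -/
def IsXn {n : ℕ} (x : Fin n → Fin n → ℝ) : Prop :=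
  (∀ i j, x i j = 0 ∨ x i j = 1) ∧ (∀ i, ∑ j, x i j = 1) ∧ (∀ j, ∑ i, x i j = 1)

/-- `(β1, β2, δ)` is dual feasible for `(a,b)`:
`δ_{kl} ≥ 0` and `−β¹_l − β²_k ≤ p_{ak} d_{bl} + δ_{kl}` for all `k≠a, l≠b`. -/
def DualFeasible {n : ℕ} (P D : Fin n → Fin n → ℝ) (a b : Fin n)
    (β1 β2 : Fin n → ℝ) (δ : Fin n → Fin n → ℝ) : Prop :=
  (∀ k l, k ≠ a → l ≠ b → 0 ≤ δ k l) ∧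
  (∀ k l, k ≠ a → l ≠ b → -β1 l - β2 k ≤ P a k * D b l + δ k l)

/-!
The cut is linear programming duality after multiplying `x` by its own entry `x a b`. Since
`x a b` is idempotent, it annihilates the rest of row `a` and of column `b`, so
`y k l = x a b * x k l`, over `k ≠ a` and `l ≠ b`, has all its row and column sums equal to `x a b`
and is bounded above by `x`. Thus `y` is feasible for the capacitated transportation problem whose
objective value is `z a b`, and the right-hand side of the cut is the value of the dual solution
`(-β1, -β2, δ)`.
-/

section WeakDuality

variable {ι κ R : Type*} [Ring R] [PartialOrder R] [IsOrderedRing R]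

theorem capacitated_transportation_weak_duality {s : Finset ι} {t : Finset κ}
    {c δ x y : ι → κ → R} {u r : ι → R} {v q : κ → R}
    (hrow : ∀ k ∈ s, ∑ l ∈ t, y k l = r k) (hcol : ∀ l ∈ t, ∑ k ∈ s, y k l = q l)
    (hy : ∀ k ∈ s, ∀ l ∈ t, 0 ≤ y k l) (hyx : ∀ k ∈ s, ∀ l ∈ t, y k l ≤ x k l)
    (hδ : ∀ k ∈ s, ∀ l ∈ t, 0 ≤ δ k l)
    (huv : ∀ k ∈ s, ∀ l ∈ t, u k + v l ≤ c k l + δ k l) :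
    ∑ k ∈ s, u k * r k + ∑ l ∈ t, v l * q l - ∑ k ∈ s, ∑ l ∈ t, δ k l * x k l ≤
      ∑ k ∈ s, ∑ l ∈ t, c k l * y k l := by
  have hu : ∑ k ∈ s, u k * r k = ∑ k ∈ s, ∑ l ∈ t, u k * y k l :=
    sum_congr rfl fun k hk ↦ by rw [← hrow k hk, mul_sum]
  have hv : ∑ l ∈ t, v l * q l = ∑ k ∈ s, ∑ l ∈ t, v l * y k l := by
    rw [sum_comm]
    exact sum_congr rfl fun l hl ↦ by rw [← hcol l hl, mul_sum]
  rw [sub_le_iff_le_add, hu, hv]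
  simp only [← sum_add_distrib]
  refine sum_le_sum fun k hk ↦ sum_le_sum fun l hl ↦ ?_
  calc u k * y k l + v l * y k l = (u k + v l) * y k l := (add_mul ..).symm
    _ ≤ (c k l + δ k l) * y k l := mul_le_mul_of_nonneg_right (huv k hk l hl) (hy k hk l hl)
    _ = c k l * y k l + δ k l * y k l := add_mul ..
    _ ≤ c k l * y k l + δ k l * x k l := by
      gcongr
      exacts [hδ k hk l hl, hyx k hk l hl]

end WeakDuality

section IdempotentEntry

variable {ι R : Type*} [Fintype ι] [Ring R] [PartialOrder R] [IsOrderedRing R]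

lemma mul_eq_zero_of_mem_stdSimplex {f : ι → R} (hf : f ∈ stdSimplex R ι) {i j : ι}
    (hi : IsIdempotentElem (f i)) (hij : j ≠ i) : f i * f j = 0 := by
  classical
  have hsum : ∑ j ∈ univ.erase i, f i * f j = 0 := by
    rw [← mul_sum, sum_erase_eq_sub (mem_univ i), hf.2, hi.mul_one_sub_self]
  exact (sum_eq_zero_iff_of_nonneg fun j _ ↦ mul_nonneg (hf.1 i) (hf.1 j)).1 hsum j
    (mem_erase.2 ⟨hij, mem_univ j⟩)

variable [DecidableEq ι]

lemma sum_erase_row_mul_of_mem_doublyStochastic {x : Matrix ι ι R}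
    (hx : x ∈ doublyStochastic R ι) {a b k : ι} (hab : IsIdempotentElem (x a b)) (hk : k ≠ a) :
    ∑ l ∈ univ.erase b, x a b * x k l = x a b := by
  have hcol : (fun i ↦ x i b) ∈ stdSimplex R ι :=
    ⟨fun _ ↦ nonneg_of_mem_doublyStochastic hx, sum_col_of_mem_doublyStochastic hx b⟩
  rw [sum_erase_eq_sub (mem_univ b), ← mul_sum, sum_row_of_mem_doublyStochastic hx,
    mul_eq_zero_of_mem_stdSimplex hcol hab hk, mul_one, sub_zero]

lemma sum_erase_col_mul_of_mem_doublyStochastic {x : Matrix ι ι R}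
    (hx : x ∈ doublyStochastic R ι) {a b l : ι} (hab : IsIdempotentElem (x a b)) (hl : l ≠ b) :
    ∑ k ∈ univ.erase a, x a b * x k l = x a b :=
  sum_erase_row_mul_of_mem_doublyStochastic (transpose_mem_doublyStochastic_iff.2 hx) hab hl

end IdempotentEntry

lemma IsXn.mem_doublyStochastic {n : ℕ} {x : Matrix (Fin n) (Fin n) ℝ} (hx : IsXn x) :
    x ∈ doublyStochastic ℝ (Fin n) := by
  obtain ⟨h01, hrow, hcol⟩ := hx
  refine mem_doublyStochastic_iff_sum.2 ⟨fun i j ↦ ?_, hrow, hcol⟩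
  rcases h01 i j with h | h
  · exact h.ge
  · exact zero_le_one.trans h.ge

-- Lawler's form of the quadratic assignment problem: arbitrary costs `c k l` replace the products
-- `P a k * D b l`.
theorem ab_cut_valid_for_QAP_general {ι R : Type*} [Fintype ι] [DecidableEq ι] [CommRing R]
    [PartialOrder R] [IsOrderedRing R] {x : Matrix ι ι R} (hx : x ∈ doublyStochastic R ι)
    {a b : ι} (hab : IsIdempotentElem (x a b)) {c δ : ι → ι → R} {β1 β2 : ι → R}
    (hδ : ∀ k l, k ≠ a → l ≠ b → 0 ≤ δ k l)
    (hβ : ∀ k l, k ≠ a → l ≠ b → -β1 l - β2 k ≤ c k l + δ k l) :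
    -((∑ l ∈ univ.erase b, β1 l) + (∑ k ∈ univ.erase a, β2 k)) * x a b
      - (∑ k ∈ univ.erase a, ∑ l ∈ univ.erase b, δ k l * x k l) ≤
      x a b * ∑ k ∈ univ.erase a, ∑ l ∈ univ.erase b, c k l * x k l := by
  have hnonneg (k l : ι) : 0 ≤ x k l := nonneg_of_mem_doublyStochastic hx
  have hdual := capacitated_transportation_weak_duality (c := c) (δ := δ) (x := x)
    (y := fun k l ↦ x a b * x k l) (u := fun k ↦ -β2 k) (v := fun l ↦ -β1 l)
    (fun k hk ↦ sum_erase_row_mul_of_mem_doublyStochastic hx hab (ne_of_mem_erase hk))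
    (fun l hl ↦ sum_erase_col_mul_of_mem_doublyStochastic hx hab (ne_of_mem_erase hl))
    (fun k _ l _ ↦ mul_nonneg (hnonneg a b) (hnonneg k l))
    (fun k _ l _ ↦ mul_le_of_le_one_left (hnonneg k l) (le_one_of_mem_doublyStochastic hx))
    (fun k hk l hl ↦ hδ k l (ne_of_mem_erase hk) (ne_of_mem_erase hl))
    (fun k hk l hl ↦ (sub_eq_neg_add ..).symm.trans_le <|
      hβ k l (ne_of_mem_erase hk) (ne_of_mem_erase hl))
  have hdualValue : ∑ k ∈ univ.erase a, -β2 k * x a b + ∑ l ∈ univ.erase b, -β1 l * x a b =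
      -((∑ l ∈ univ.erase b, β1 l) + ∑ k ∈ univ.erase a, β2 k) * x a b := by
    rw [← sum_mul, ← sum_mul, sum_neg_distrib, sum_neg_distrib]
    ring
  simpa only [hdualValue, mul_left_comm _ (x a b), ← mul_sum] using hdual

/-- every `ab`-cut is valid for the quadratic assignment problem: for
every permutation matrix `x ∈ X_n`, with `z_{ij} = x_{ij} · Σ_{k≠i,l≠j} p_{ik} d_{jl} x_{kl}`,
and every dual feasible triple `(β¹,β²,δ)` for `(a,b)`, the `ab`-cut holds at `(x,z)`. -/
theorem ab_cut_valid_for_QAP (n : ℕ) (hn : 2 ≤ n) (P D : Fin n → Fin n → ℝ)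
    (x z : Fin n → Fin n → ℝ) (hx : IsXn x)
    (hz : ∀ i j, z i j =
      x i j * ∑ k ∈ univ.erase i, ∑ l ∈ univ.erase j, P i k * D j l * x k l)
    (a b : Fin n) (β1 β2 : Fin n → ℝ) (δ : Fin n → Fin n → ℝ)
    (hdual : DualFeasible P D a b β1 β2 δ) :
    -((∑ l ∈ univ.erase b, β1 l) + (∑ k ∈ univ.erase a, β2 k)) * x a b
      - (∑ k ∈ univ.erase a, ∑ l ∈ univ.erase b, δ k l * x k l) ≤ z a b := by
  rw [hz]
  exact ab_cut_valid_for_QAP_general hx.mem_doublyStochastic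
    (IsIdempotentElem.iff_eq_zero_or_one.2 (hx.1 a b)) hdual.1 hdual.2
end

section
/- Every ab-cut is valid for the projection of the relaxed Adams–Johnson linearization: for every pair (x,y) ∈ LAJ(D,P), all a,b ∈ {1,…,n}, and every triple (β¹,β²,δ) that is dual feasible for (a,b), the inequality z(y)_{ab} ≥ −(Σ_{l≠b} β¹_l + Σ_{k≠a} β²_k)·x_{ab} − Σ_{k≠a, l≠b} δ_{kl} x_{kl} holds. -/
open Finset

/-!
Fix `(a, b)`. The slice `u k l = y a b k l` is a nonnegative flow on the transportation network
between the rows `k ≠ a` and the columns `l ≠ b`: by symmetry of `y` every marginal of `u` equals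
`x a b`, and `u k l` is one term of a nonnegative sum equal to `x k l`, which is thus a capacity
for it. So `z(y)_{ab}` is the cost of a feasible flow, and the `ab`-cut is weak linear programming
duality for the multipliers `-β2` (rows), `-β1` (columns) and `δ` (capacities).
-/

section Transportation

variable {ι κ R : Type*} {s : Finset ι} {t : Finset κ} {u : ι → κ → R}
  {α r : ι → R} {β q : κ → R}

theorem sum_sum_add_mul_of_marginals [NonUnitalNonAssocSemiring R]
    (hrow : ∀ i ∈ s, ∑ j ∈ t, u i j = r i) (hcol : ∀ j ∈ t, ∑ i ∈ s, u i j = q j) :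
    ∑ i ∈ s, ∑ j ∈ t, (α i + β j) * u i j = ∑ i ∈ s, α i * r i + ∑ j ∈ t, β j * q j := by
  have row : ∑ i ∈ s, ∑ j ∈ t, α i * u i j = ∑ i ∈ s, α i * r i :=
    sum_congr rfl fun i hi => by rw [← mul_sum, hrow i hi]
  have col : ∑ i ∈ s, ∑ j ∈ t, β j * u i j = ∑ j ∈ t, β j * q j := by
    rw [sum_comm]
    exact sum_congr rfl fun j hj => by rw [← mul_sum, hcol j hj]
  simp only [add_mul, sum_add_distrib, row, col]

theorem capacitated_transportation_weak_duality_s9 [Ring R] [PartialOrder R] [IsOrderedRing R]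
    {c δ cap : ι → κ → R}
    (hrow : ∀ i ∈ s, ∑ j ∈ t, u i j = r i) (hcol : ∀ j ∈ t, ∑ i ∈ s, u i j = q j)
    (hu : ∀ i ∈ s, ∀ j ∈ t, 0 ≤ u i j) (hcap : ∀ i ∈ s, ∀ j ∈ t, u i j ≤ cap i j)
    (hδ : ∀ i ∈ s, ∀ j ∈ t, 0 ≤ δ i j) (hdual : ∀ i ∈ s, ∀ j ∈ t, α i + β j ≤ c i j + δ i j) :
    ∑ i ∈ s, α i * r i + ∑ j ∈ t, β j * q j - ∑ i ∈ s, ∑ j ∈ t, δ i j * cap i j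
      ≤ ∑ i ∈ s, ∑ j ∈ t, c i j * u i j := by
  have pointwise : ∀ i ∈ s, ∀ j ∈ t, (α i + β j) * u i j ≤ c i j * u i j + δ i j * cap i j :=
    fun i hi j hj => calc
      (α i + β j) * u i j ≤ (c i j + δ i j) * u i j :=
        mul_le_mul_of_nonneg_right (hdual i hi j hj) (hu i hi j hj)
      _ = c i j * u i j + δ i j * u i j := add_mul _ _ _
      _ ≤ c i j * u i j + δ i j * cap i j :=
        add_le_add_right (mul_le_mul_of_nonneg_left (hcap i hi j hj) (hδ i hi j hj)) _
  rw [sub_le_iff_le_add, ← sum_sum_add_mul_of_marginals hrow hcol]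
  simp only [← sum_add_distrib]
  exact sum_le_sum fun i hi => sum_le_sum (pointwise i hi)

end Transportation

section AdamsJohnson

variable {ι κ R : Type*} [Fintype ι] [DecidableEq ι] [Fintype κ] [DecidableEq κ]

/-- The Adams–Johnson constraints linking an assignment `x` of `ι` to `κ` to the linearization
`y i j k l` of the products `x i j * x k l`. As in `MemLAJ`, entries with `i = k` or `j = l` are
unconstrained. -/
structure IsAdamsJohnsonLift [AddCommMonoid R] [LE R] (x : ι → κ → R)
    (y : ι → κ → ι → κ → R) : Prop where
  nonneg : ∀ i j k l, i ≠ k → j ≠ l → 0 ≤ y i j k l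
  symm : ∀ i j k l, i ≠ k → j ≠ l → y i j k l = y k l i j
  sum_left : ∀ j k l, j ≠ l → ∑ i ∈ univ.erase k, y i j k l = x k l
  sum_right : ∀ i k l, i ≠ k → ∑ j ∈ univ.erase l, y i j k l = x k l

theorem MemLAJ.isAdamsJohnsonLift {n : ℕ} {x : Fin n → Fin n → ℝ}
    {y : Fin n → Fin n → Fin n → Fin n → ℝ} (h : MemLAJ x y) : IsAdamsJohnsonLift x y :=
  let ⟨_, nonneg, symm, sum_left, sum_right⟩ := h
  ⟨nonneg, symm, sum_left, sum_right⟩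

namespace IsAdamsJohnsonLift

variable {x : ι → κ → R} {y : ι → κ → ι → κ → R} {a k : ι} {b l : κ}

theorem sum_slice_row [AddCommMonoid R] [LE R] (h : IsAdamsJohnsonLift x y) (hk : k ≠ a) :
    ∑ l ∈ univ.erase b, y a b k l = x a b := by
  rw [← h.sum_right k a b hk]
  exact sum_congr rfl fun l hl => h.symm a b k l hk.symm (ne_of_mem_erase hl).symm

theorem sum_slice_col [AddCommMonoid R] [LE R] (h : IsAdamsJohnsonLift x y) (hl : l ≠ b) :
    ∑ k ∈ univ.erase a, y a b k l = x a b := by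
  rw [← h.sum_left l a b hl]
  exact sum_congr rfl fun k hk => h.symm a b k l (ne_of_mem_erase hk).symm hl.symm

theorem slice_le [AddCommMonoid R] [PartialOrder R] [IsOrderedAddMonoid R]
    (h : IsAdamsJohnsonLift x y) (hk : k ≠ a) (hl : l ≠ b) : y a b k l ≤ x k l := by
  rw [← h.sum_left b k l hl.symm]
  exact single_le_sum (f := fun i => y i b k l)
    (fun i hi => h.nonneg i b k l (ne_of_mem_erase hi) hl.symm)
    (mem_erase.2 ⟨hk.symm, mem_univ a⟩)

end IsAdamsJohnsonLift

theorem ab_cut_valid_for_proj_LAJ_general [Ring R] [PartialOrder R] [IsOrderedRing R]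
    {x : ι → κ → R} {y : ι → κ → ι → κ → R} (hxy : IsAdamsJohnsonLift x y) (a : ι) (b : κ)
    {c δ : ι → κ → R} {β1 : κ → R} {β2 : ι → R}
    (hδ : ∀ k l, k ≠ a → l ≠ b → 0 ≤ δ k l)
    (hdual : ∀ k l, k ≠ a → l ≠ b → -β1 l - β2 k ≤ c k l + δ k l) :
    -((∑ l ∈ univ.erase b, β1 l) + (∑ k ∈ univ.erase a, β2 k)) * x a b
      - (∑ k ∈ univ.erase a, ∑ l ∈ univ.erase b, δ k l * x k l)
      ≤ ∑ k ∈ univ.erase a, ∑ l ∈ univ.erase b, c k l * y a b k l := by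
  have dual_value :
      -((∑ l ∈ univ.erase b, β1 l) + (∑ k ∈ univ.erase a, β2 k)) * x a b
        = ∑ k ∈ univ.erase a, -β2 k * x a b + ∑ l ∈ univ.erase b, -β1 l * x a b := by
    simp only [← sum_mul, sum_neg_distrib, neg_add_rev, add_mul]
  rw [dual_value]
  refine capacitated_transportation_weak_duality_s9
    (fun k hk => hxy.sum_slice_row (ne_of_mem_erase hk))
    (fun l hl => hxy.sum_slice_col (ne_of_mem_erase hl))
    (fun k hk l hl => hxy.nonneg a b k l (ne_of_mem_erase hk).symm (ne_of_mem_erase hl).symm)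
    (fun k hk l hl => hxy.slice_le (ne_of_mem_erase hk) (ne_of_mem_erase hl))
    (fun k hk l hl => hδ k l (ne_of_mem_erase hk) (ne_of_mem_erase hl))
    (fun k hk l hl => ?_)
  calc
    -β2 k + -β1 l = -β1 l - β2 k := by abel
    _ ≤ c k l + δ k l := hdual k l (ne_of_mem_erase hk) (ne_of_mem_erase hl)

end AdamsJohnson

/-- every `ab`-cut is valid for the projection of the relaxed
Adams–Johnson linearization. -/
theorem ab_cut_valid_for_proj_LAJ (n : ℕ) (hn : 2 ≤ n) (P D : Fin n → Fin n → ℝ)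
    (x : Fin n → Fin n → ℝ) (y : Fin n → Fin n → Fin n → Fin n → ℝ)
    (hxy : MemLAJ x y)
    (a b : Fin n) (β1 β2 : Fin n → ℝ) (δ : Fin n → Fin n → ℝ)
    (hdual : DualFeasible P D a b β1 β2 δ) :
    -((∑ l ∈ univ.erase b, β1 l) + (∑ k ∈ univ.erase a, β2 k)) * x a b
      - (∑ k ∈ univ.erase a, ∑ l ∈ univ.erase b, δ k l * x k l) ≤ projZ P D y a b := by
  exact ab_cut_valid_for_proj_LAJ_general hxy.isAdamsJohnsonLift a b hdual.1 hdual.2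
end

section
/- Let (x*,z*) ∈ LXY(D,P) and a,b ∈ {1,…,n} with x*_{ab} > 0. Suppose there exists a bijection φ : {1,…,n}\{a} → {1,…,n}\{b} attaining the minimum l_{ab} whose associated 0/1 matrix x̄ (with x̄_{kl} = 1 iff φ(k) = l) satisfies x̄_{kl} ≤ x*_{kl}/x*_{ab} for all k≠a, l≠b. Then no ab-cut is violated by (x*,z*): for every triple (β¹,β²,δ) that is dual feasible for (a,b), the inequality −(Σ_{l≠b} β¹_l + Σ_{k≠a} β²_k)·x*_{ab} − Σ_{k≠a, l≠b} δ_{kl} x*_{kl} ≤ z*_{ab} holds. -/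
open Finset

/-- `(x, z)` lies in the linear relaxation `LXY(D,P)` of the Xia–Yuan linearization,
where `lo i j = l_{ij}` and `up i j = u_{ij}` are the Big-M constants. -/
def MemLXY {n : ℕ} (P D lo up : Fin n → Fin n → ℝ)
    (x z : Fin n → Fin n → ℝ) : Prop :=
  IsLXn x ∧
  (∀ i j, lo i j * x i j ≤ z i j) ∧
  (∀ i j, (∑ k ∈ univ.erase i, ∑ l ∈ univ.erase j, P i k * D j l * x k l)
      + up i j * (x i j - 1) ≤ z i j)

/-- `v` is the corresponding maximum. -/
def IsUVal {n : ℕ} (P D : Fin n → Fin n → ℝ) (i j : Fin n) (v : ℝ) : Prop :=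
  IsGreatest {w : ℝ | ∃ σ : Equiv.Perm (Fin n), σ i = j ∧
    w = ∑ k ∈ univ.erase i, P i k * D j (σ k)} v

/-!
Divided by `x_{ab}`, the left-hand side of an `ab`-cut is the dual objective of the assignment
problem with costs `p_{ak} d_{bl}` and capacities `x_{kl} / x_{ab}`. The domination hypothesis says
that the minimizing permutation respects these capacities, so weak duality bounds the left-hand
side of every cut by `l_{ab} x_{ab}`, which is at most `z_{ab}`.
-/

section Transport

variable {ι κ K : Type*} [CommRing K] [PartialOrder K]

/-- A feasible plan `y` of the transportation problem with supplies `μ` on `s`, demands `ν` on `t`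
and capacities `x`. Values of `y` and `x` off `s × t` are ignored. -/
structure IsTransportPlan (s : Finset ι) (t : Finset κ) (μ : ι → K) (ν : κ → K)
    (x y : ι → κ → K) : Prop where
  nonneg : ∀ k ∈ s, ∀ l ∈ t, 0 ≤ y k l
  le_capacity : ∀ k ∈ s, ∀ l ∈ t, y k l ≤ x k l
  row_sum : ∀ k ∈ s, ∑ l ∈ t, y k l = μ k
  col_sum : ∀ l ∈ t, ∑ k ∈ s, y k l = ν l

/-- A feasible solution of the linear program dual to the capacitated transportation problem with
costs `c`: `β₁` prices the demands, `β₂` the supplies and `δ` the capacities, with the signs of the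
`ab`-cuts. -/
structure IsTransportDual (s : Finset ι) (t : Finset κ) (c : ι → κ → K)
    (β₁ : κ → K) (β₂ : ι → K) (δ : ι → κ → K) : Prop where
  nonneg : ∀ k ∈ s, ∀ l ∈ t, 0 ≤ δ k l
  le_cost_add : ∀ k ∈ s, ∀ l ∈ t, -β₁ l - β₂ k ≤ c k l + δ k l

variable {s : Finset ι} {t : Finset κ} {μ : ι → K} {ν : κ → K} {x y c δ : ι → κ → K}
  {β₁ : κ → K} {β₂ : ι → K}

theorem IsTransportPlan.sum_sum_potential_mul (hy : IsTransportPlan s t μ ν x y)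
    (f : κ → K) (g : ι → K) :
    ∑ k ∈ s, ∑ l ∈ t, (f l + g k) * y k l = ∑ l ∈ t, f l * ν l + ∑ k ∈ s, g k * μ k := by
  have demand : ∑ k ∈ s, ∑ l ∈ t, f l * y k l = ∑ l ∈ t, f l * ν l := by
    rw [sum_comm]
    exact sum_congr rfl fun l hl => by rw [← mul_sum, hy.col_sum l hl]
  have supply : ∑ k ∈ s, ∑ l ∈ t, g k * y k l = ∑ k ∈ s, g k * μ k :=
    sum_congr rfl fun k hk => by rw [← mul_sum, hy.row_sum k hk]
  simp only [add_mul, sum_add_distrib, demand, supply]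

theorem IsTransportDual.weak_duality [IsOrderedRing K] (hd : IsTransportDual s t c β₁ β₂ δ)
    (hy : IsTransportPlan s t μ ν x y) :
    -(∑ l ∈ t, β₁ l * ν l + ∑ k ∈ s, β₂ k * μ k) - ∑ k ∈ s, ∑ l ∈ t, δ k l * x k l
      ≤ ∑ k ∈ s, ∑ l ∈ t, c k l * y k l := by
  have entry : ∀ k ∈ s, ∀ l ∈ t, -((β₁ l + β₂ k) * y k l) ≤ c k l * y k l + δ k l * x k l := by
    intro k hk l hl
    calc -((β₁ l + β₂ k) * y k l) = (-β₁ l - β₂ k) * y k l := by ring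
      _ ≤ (c k l + δ k l) * y k l :=
        mul_le_mul_of_nonneg_right (hd.le_cost_add k hk l hl) (hy.nonneg k hk l hl)
      _ = c k l * y k l + δ k l * y k l := add_mul ..
      _ ≤ c k l * y k l + δ k l * x k l :=
        add_le_add_right
          (mul_le_mul_of_nonneg_left (hy.le_capacity k hk l hl) (hd.nonneg k hk l hl)) _
  rw [sub_le_iff_le_add, ← hy.sum_sum_potential_mul]
  simpa only [sum_neg_distrib, sum_add_distrib] using
    sum_le_sum fun k hk => sum_le_sum (entry k hk)

end Transport

section Assignment

variable {ι κ K : Type*} [DecidableEq κ]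

/-- The 0/1 matrix of the map `σ`, scaled by `m`; scaling by `x_{ab}` avoids dividing the capacities
by it. -/
def assignmentPlan [Zero K] (σ : ι → κ) (m : K) (k : ι) (l : κ) : K :=
  if σ k = l then m else 0

variable [CommRing K] {s : Finset ι} {t : Finset κ} {σ : ι → κ} {m : K}

theorem sum_sum_mul_assignmentPlan (hσ : Set.MapsTo σ s t) (c : ι → κ → K) :
    ∑ k ∈ s, ∑ l ∈ t, c k l * assignmentPlan σ m k l = (∑ k ∈ s, c k (σ k)) * m := by
  rw [sum_mul]
  refine sum_congr rfl fun k hk => ?_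
  simp only [assignmentPlan, mul_ite, mul_zero, sum_ite_eq, if_pos (mem_coe.1 (hσ hk))]

theorem isTransportPlan_assignmentPlan [PartialOrder K] {x : ι → κ → K} (hσ : Set.BijOn σ s t)
    (hm : 0 ≤ m) (hx : ∀ k ∈ s, ∀ l ∈ t, 0 ≤ x k l) (hmx : ∀ k ∈ s, m ≤ x k (σ k)) :
    IsTransportPlan s t (fun _ => m) (fun _ => m) x (assignmentPlan σ m) where
  nonneg _ _ _ _ := ite_nonneg hm le_rfl
  le_capacity k hk l hl := by
    rw [assignmentPlan]
    split_ifs with hkl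
    exacts [hkl ▸ hmx k hk, hx k hk l hl]
  row_sum k hk := by
    simp only [assignmentPlan, sum_ite_eq, if_pos (mem_coe.1 (hσ.mapsTo hk))]
  col_sum l hl := by
    obtain ⟨k, hk, rfl⟩ := hσ.surjOn hl
    have apply_eq_zero : ∀ j ∈ s, j ≠ k → assignmentPlan σ m j (σ k) = 0 :=
      fun j hj hjk => if_neg (hσ.injOn.ne hj hk hjk)
    rw [sum_eq_single_of_mem k hk apply_eq_zero]
    exact if_pos rfl

end Assignment

theorem bijOn_erase_of_apply_eq {ι κ : Type*} [Fintype ι] [Fintype κ] [DecidableEq ι]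
    [DecidableEq κ] (e : ι ≃ κ) {a : ι} {b : κ} (hab : e a = b) :
    Set.BijOn e (univ.erase a : Finset ι) (univ.erase b : Finset κ) :=
  e.bijOn fun k => by simp [← hab]

theorem no_violated_ab_cut_of_dominated_argmin_general {ι κ K : Type*} [Fintype ι] [Fintype κ]
    [DecidableEq ι] [DecidableEq κ] [CommRing K] [PartialOrder K] [IsOrderedRing K]
    {c x δ : ι → κ → K} {z : K} {a : ι} {b : κ} {β₁ : κ → K} {β₂ : ι → K}
    (hx : ∀ k l, 0 ≤ x k l) (e : ι ≃ κ) (hab : e a = b)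
    (hcost : (∑ k ∈ univ.erase a, c k (e k)) * x a b ≤ z)
    (hdom : ∀ k ≠ a, x a b ≤ x k (e k))
    (hdual : IsTransportDual (univ.erase a) (univ.erase b) c β₁ β₂ δ) :
    -((∑ l ∈ univ.erase b, β₁ l) + (∑ k ∈ univ.erase a, β₂ k)) * x a b
      - (∑ k ∈ univ.erase a, ∑ l ∈ univ.erase b, δ k l * x k l) ≤ z := by
  have he := bijOn_erase_of_apply_eq e hab
  have hplan := isTransportPlan_assignmentPlan he (hx a b) (fun k _ l _ => hx k l)
    fun k hk => hdom k (ne_of_mem_erase hk)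
  have hcut := hdual.weak_duality hplan
  rw [sum_sum_mul_assignmentPlan he.mapsTo, ← sum_mul, ← sum_mul, ← add_mul, ← neg_mul] at hcut
  exact hcut.trans hcost

theorem DualFeasible.isTransportDual {n : ℕ} {P D : Fin n → Fin n → ℝ} {a b : Fin n}
    {β₁ β₂ : Fin n → ℝ} {δ : Fin n → Fin n → ℝ} (h : DualFeasible P D a b β₁ β₂ δ) :
    IsTransportDual (univ.erase a) (univ.erase b) (fun k l => P a k * D b l) β₁ β₂ δ where
  nonneg k hk l hl := h.1 k l (ne_of_mem_erase hk) (ne_of_mem_erase hl)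
  le_cost_add k hk l hl := h.2 k l (ne_of_mem_erase hk) (ne_of_mem_erase hl)

theorem le_apply_of_ite_le_div {ι κ K : Type*} [DecidableEq κ] [Field K] [LinearOrder K]
    [IsStrictOrderedRing K] {x : ι → κ → K} {m : K} {σ : ι → κ} {a : ι} {b : κ} (hm : 0 < m)
    (hσ : σ.Injective) (hab : σ a = b)
    (h : ∀ k l, k ≠ a → l ≠ b → (if σ k = l then (1 : K) else 0) ≤ x k l / m) :
    ∀ k ≠ a, m ≤ x k (σ k) := by
  intro k hk
  have hkb : σ k ≠ b := hab ▸ hσ.ne hk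
  simpa only [if_true, one_le_div hm] using h k (σ k) hk hkb

/-- if `x*_{ab} > 0` and some bijection attaining the minimum `l_{ab}`
(represented as a permutation `σ` with `σ a = b`) has its 0/1 matrix dominated entrywise
by `x*_{kl}/x*_{ab}`, then no `ab`-cut is violated by `(x*, z*)`. -/
theorem no_violated_ab_cut_of_dominated_argmin (n : ℕ) (hn : 2 ≤ n)
    (P D lo up : Fin n → Fin n → ℝ)
    (hlo : ∀ i j, IsLVal P D i j (lo i j))
    (hup : ∀ i j, IsUVal P D i j (up i j))
    (xs zs : Fin n → Fin n → ℝ) (hxz : MemLXY P D lo up xs zs)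
    (a b : Fin n) (hab : 0 < xs a b)
    (σ : Equiv.Perm (Fin n)) (hσab : σ a = b)
    (hmin : (∑ k ∈ univ.erase a, P a k * D b (σ k)) = lo a b)
    (hdom : ∀ k l, k ≠ a → l ≠ b →
      (if σ k = l then (1 : ℝ) else 0) ≤ xs k l / xs a b)
    (β1 β2 : Fin n → ℝ) (δ : Fin n → Fin n → ℝ)
    (hdual : DualFeasible P D a b β1 β2 δ) :
    -((∑ l ∈ univ.erase b, β1 l) + (∑ k ∈ univ.erase a, β2 k)) * xs a b
      - (∑ k ∈ univ.erase a, ∑ l ∈ univ.erase b, δ k l * xs k l) ≤ zs a b :=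
  no_violated_ab_cut_of_dominated_argmin_general hxz.1.1 σ hσab (hmin ▸ hxz.2.1 a b)
    (le_apply_of_ite_le_div hab σ.injective hσab hdom) hdual.isTransportDual
end
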